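/- arXiv:2012.13515 — 2 statements merged into one kernel-verified Lean document; each statement's English description precedes it below -/
import Mathlib

section
/- Let E ⊆ ℝ^d be compact, ε > 0, x ∈ ∂E_ε, and let (x_n) be a sequence in ℝ^d with x_n → x, x_n ≠ x for all n, and (x_n − x)/‖x_n − x‖ → v for some unit vector v. Then: (i) if ⟨y − x, v⟩ > 0 for some contributor y ∈ Π_E(x), then there is N such that x_n lies in the open ball B_ε(y) for all n ≥ N; (ii) if ⟨y − x, v⟩ < 0 for every y ∈ Π_E(x), then there is N such that x_n ∉ E_ε for all n ≥ N. -/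
open Metric Set Filter Topology RealInnerProductSpace

noncomputable section

/-- The closed ε-neighbourhood of a set `E`. -/
def eNbhd {d : ℕ} (E : Set (EuclideanSpace ℝ (Fin d))) (ε : ℝ) :
    Set (EuclideanSpace ℝ (Fin d)) :=
  closure (⋃ y ∈ E, ball y ε)

/-- The set of contributors of a boundary point `x`: points of `∂E` at distance exactly `ε`. -/
def contributors {d : ℕ} (E : Set (EuclideanSpace ℝ (Fin d))) (ε : ℝ)
    (x : EuclideanSpace ℝ (Fin d)) : Set (EuclideanSpace ℝ (Fin d)) :=
  {y ∈ frontier E | ‖y - x‖ = ε}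

/-- Points of the closed neighbourhood are within `ε` of some point of the compact set. -/
lemma exists_near_of_mem_eNbhd {d : ℕ} {E : Set (EuclideanSpace ℝ (Fin d))}
    (hE : IsCompact E) {ε : ℝ} {z : EuclideanSpace ℝ (Fin d)}
    (hz : z ∈ eNbhd E ε) : ∃ y ∈ E, ‖y - z‖ ≤ ε := by
  have hne : E.Nonempty := by
    by_contra h
    rw [Set.not_nonempty_iff_eq_empty] at h
    simp [eNbhd, h] at hz
  obtain ⟨y, hy, hyd⟩ := hE.exists_infDist_eq_dist hne z
  refine ⟨y, hy, ?_⟩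
  have hcl : IsClosed {w : EuclideanSpace ℝ (Fin d) | infDist w E ≤ ε} :=
    isClosed_le (continuous_infDist_pt E) continuous_const
  have hsub : (⋃ y ∈ E, ball y ε) ⊆ {w : EuclideanSpace ℝ (Fin d) | infDist w E ≤ ε} := by
    intro w hw
    simp only [Set.mem_iUnion, mem_ball] at hw
    obtain ⟨a, ha, hwa⟩ := hw
    exact (infDist_le_dist_of_mem ha).trans hwa.le
  have h1 : infDist z E ≤ ε := closure_minimal hsub hcl hz
  rw [hyd, dist_comm, dist_eq_norm] at h1
  exact h1

lemma le_of_mem_frontier_eNbhd {d : ℕ} {E : Set (EuclideanSpace ℝ (Fin d))}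
    {ε : ℝ} {x : EuclideanSpace ℝ (Fin d)}
    (hx : x ∈ frontier (eNbhd E ε)) {y : EuclideanSpace ℝ (Fin d)} (hy : y ∈ E) :
    ε ≤ ‖y - x‖ := by
  by_contra h
  push Not at h
  apply hx.2
  rw [mem_interior]
  refine ⟨ball y ε, ?_, isOpen_ball, ?_⟩
  · exact (Set.subset_biUnion_of_mem (u := fun y => ball y ε) hy).trans subset_closure
  · rwa [mem_ball, dist_comm, dist_eq_norm]

lemma contributor_of_mem {d : ℕ} {E : Set (EuclideanSpace ℝ (Fin d))}
    {ε : ℝ} (hε : 0 < ε) {x : EuclideanSpace ℝ (Fin d)}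
    (hx : x ∈ frontier (eNbhd E ε)) {y : EuclideanSpace ℝ (Fin d)} (hy : y ∈ E)
    (hyx : ‖y - x‖ ≤ ε) : y ∈ contributors E ε x := by
  have heq : ‖y - x‖ = ε := le_antisymm hyx (le_of_mem_frontier_eNbhd hx hy)
  refine ⟨⟨subset_closure hy, fun hint => ?_⟩, heq⟩
  have hc : Tendsto (fun s : ℝ => y - s • (y - x)) (𝓝[>] 0) (𝓝 y) := by
    have : Continuous (fun s : ℝ => y - s • (y - x)) := by fun_prop
    have h := this.tendsto 0
    simp only [zero_smul, sub_zero] at h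
    exact h.mono_left nhdsWithin_le_nhds
  have h1 := hc.eventually (mem_interior_iff_mem_nhds.mp hint)
  have h2 : ∀ᶠ s : ℝ in 𝓝[>] 0, s ∈ Ioo (0 : ℝ) 1 := Ioo_mem_nhdsGT one_pos
  obtain ⟨s, hs, hs0, hs1⟩ := (h1.and h2).exists
  have h3 := le_of_mem_frontier_eNbhd hx hs
  have h4 : y - s • (y - x) - x = (1 - s) • (y - x) := by module
  rw [h4, norm_smul, heq, Real.norm_of_nonneg (by linarith)] at h3
  nlinarith

lemma norm_sq_expand {d : ℕ} (x y z : EuclideanSpace ℝ (Fin d)) (hz : z ≠ x) :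
    ‖y - z‖ ^ 2 = ‖y - x‖ ^ 2
      + ‖z - x‖ * (‖z - x‖ - 2 * ⟪y - x, (‖z - x‖)⁻¹ • (z - x)⟫) := by
  have h0 : ‖z - x‖ ≠ 0 := norm_ne_zero_iff.mpr (sub_ne_zero.mpr hz)
  have h1 : y - z = (y - x) - (z - x) := by abel
  rw [h1, norm_sub_sq_real, inner_smul_right]
  field_simp
  ring

/-- Tails of directed sequences: (i) if `⟨y - x, v⟩ > 0` for a contributor `y`, then the
tail of the sequence lies in the open ball `B_ε(y)`; (ii) if `⟨y - x, v⟩ < 0` for all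
contributors, then the tail of the sequence lies outside `E_ε`. -/
theorem tails_of_directed_sequences {d : ℕ} (E : Set (EuclideanSpace ℝ (Fin d)))
    (hE : IsCompact E) {ε : ℝ} (hε : 0 < ε) (x : EuclideanSpace ℝ (Fin d))
    (hx : x ∈ frontier (eNbhd E ε)) (u : ℕ → EuclideanSpace ℝ (Fin d))
    (hne : ∀ n, u n ≠ x) (hconv : Tendsto u atTop (nhds x))
    (v : EuclideanSpace ℝ (Fin d))
    (hdir : Tendsto (fun n => (‖u n - x‖)⁻¹ • (u n - x)) atTop (nhds v)) :
    (∀ y ∈ contributors E ε x, 0 < ⟪y - x, v⟫ →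
      ∃ N, ∀ n ≥ N, u n ∈ ball y ε) ∧
    ((∀ y ∈ contributors E ε x, ⟪y - x, v⟫ < 0) →
      ∃ N, ∀ n ≥ N, u n ∉ eNbhd E ε) := by
  have ht : Tendsto (fun n => ‖u n - x‖) atTop (𝓝 0) := by
    have := (hconv.sub_const x).norm
    simpa using this
  have hpos : ∀ n, 0 < ‖u n - x‖ := fun n => norm_pos_iff.mpr (sub_ne_zero.mpr (hne n))
  constructor
  · rintro y ⟨-, hy⟩ hv
    have h1 : Tendsto (fun n => ‖u n - x‖ - 2 * ⟪y - x, (‖u n - x‖)⁻¹ • (u n - x)⟫) atTop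
        (𝓝 (0 - 2 * ⟪y - x, v⟫)) :=
      ht.sub ((tendsto_const_nhds.inner hdir).const_mul 2)
    have h2 := h1.eventually (gt_mem_nhds (show (0 - 2 * ⟪y - x, v⟫ : ℝ) < 0 by linarith))
    obtain ⟨N, hN⟩ := eventually_atTop.mp h2
    refine ⟨N, fun n hn => ?_⟩
    have h3 := norm_sq_expand x y (u n) (hne n)
    have h4 := mul_neg_of_pos_of_neg (hpos n) (hN n hn)
    rw [mem_ball, dist_comm, dist_eq_norm]
    rw [hy] at h3
    exact lt_of_pow_lt_pow_left₀ 2 hε.le (by linarith)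
  · intro hall
    by_contra hcon
    push Not at hcon
    have hfreq : ∃ᶠ n in atTop, u n ∈ eNbhd E ε := frequently_atTop.mpr hcon
    obtain ⟨φ, hφ, hmem⟩ := extraction_of_frequently_atTop hfreq
    choose y hyE hyu using fun n => exists_near_of_mem_eNbhd hE (hmem n)
    obtain ⟨a, haE, ψ, hψ, hlim⟩ := hE.tendsto_subseq hyE
    have hk : Tendsto (fun n => φ (ψ n)) atTop atTop :=
      hφ.tendsto_atTop.comp hψ.tendsto_atTop
    have hle : ‖a - x‖ ≤ ε :=
      le_of_tendsto' (hlim.sub (hconv.comp hk)).norm (fun n => hyu (ψ n))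
    have hav := hall a (contributor_of_mem hε hx haE hle)
    have h1 : Tendsto (fun n => ‖u (φ (ψ n)) - x‖
        - 2 * ⟪y (ψ n) - x, (‖u (φ (ψ n)) - x‖)⁻¹ • (u (φ (ψ n)) - x)⟫) atTop
        (𝓝 (0 - 2 * ⟪a - x, v⟫)) :=
      (ht.comp hk).sub (((hlim.sub_const x).inner (hdir.comp hk)).const_mul 2)
    have h2 := h1.eventually (lt_mem_nhds (show (0 : ℝ) < 0 - 2 * ⟪a - x, v⟫ by linarith))
    obtain ⟨n, hn⟩ := h2.exists
    have h3 := norm_sq_expand x (y (ψ n)) (u (φ (ψ n))) (hne _)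
    have h4 := mul_pos (hpos (φ (ψ n))) hn
    have h5 := pow_le_pow_left₀ hε.le (le_of_mem_frontier_eNbhd hx (hyE (ψ n))) 2
    have h6 := pow_le_pow_left₀ (norm_nonneg _) (hyu (ψ n)) 2
    linarith

end
end

section
/- Let E ⊆ ℝ^d be compact, ε > 0, x ∈ ∂E_ε, and let ξ be a unit vector. Then: (i) if ξ ∈ Ξ_x(E_ε), then ⟨y − x, ξ⟩ ≤ 0 for every contributor y ∈ Π_E(x); (ii) if ⟨y − x, ξ⟩ < 0 for every y ∈ Π_E(x), then ξ ∈ Ξ_x(E_ε). -/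
open Metric Set Filter Topology RealInnerProductSpace

noncomputable section

/-- The set of outward directions from `E_ε` at `x`. -/
def outwardDirs {d : ℕ} (E : Set (EuclideanSpace ℝ (Fin d))) (ε : ℝ)
    (x : EuclideanSpace ℝ (Fin d)) : Set (EuclideanSpace ℝ (Fin d)) :=
  {ξ | ‖ξ‖ = 1 ∧ ∃ u : ℕ → EuclideanSpace ℝ (Fin d), (∀ n, u n ∉ eNbhd E ε) ∧
    Tendsto u atTop (nhds x) ∧
    Tendsto (fun n => (‖u n - x‖)⁻¹ • (u n - x)) atTop (nhds ξ)}

/-- Orientation of outward directions relative to contributors: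
(i) outward directions form a nonpositive inner product with `y - x` for every contributor `y`;
(ii) a unit vector with strictly negative inner product with `y - x` for every contributor `y`
is an outward direction. -/
theorem outwardDirs_orientation {d : ℕ} (E : Set (EuclideanSpace ℝ (Fin d)))
    (hE : IsCompact E) {ε : ℝ} (hε : 0 < ε) (x : EuclideanSpace ℝ (Fin d))
    (hx : x ∈ frontier (eNbhd E ε)) (ξ : EuclideanSpace ℝ (Fin d)) (hξ : ‖ξ‖ = 1) :
    (ξ ∈ outwardDirs E ε x → ∀ y ∈ contributors E ε x, ⟪y - x, ξ⟫ ≤ 0) ∧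
    ((∀ y ∈ contributors E ε x, ⟪y - x, ξ⟫ < 0) → ξ ∈ outwardDirs E ε x) := by
  have hsub : ∀ y ∈ E, ∀ z, ‖z - y‖ ≤ ε → z ∈ eNbhd E ε := by
    intro y hy z hz
    have h1 : closure (ball y ε) ⊆ eNbhd E ε :=
      closure_mono (subset_biUnion_of_mem (u := fun y => ball y ε) hy)
    apply h1
    rw [closure_ball y hε.ne']
    simpa [mem_closedBall, dist_eq_norm] using hz
  have hsup : ∀ z ∈ eNbhd E ε, ∃ y ∈ E, ‖z - y‖ ≤ ε := by
    intro z hz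
    have h1 : eNbhd E ε ⊆ cthickening ε E := by
      apply closure_minimal _ isClosed_cthickening
      intro w hw
      simp only [mem_iUnion] at hw
      obtain ⟨y, hy, hw⟩ := hw
      exact mem_cthickening_of_dist_le w y ε E hy (mem_ball.1 hw).le
    have h2 := h1 hz
    rw [hE.cthickening_eq_biUnion_closedBall hε.le] at h2
    simp only [mem_iUnion] at h2
    obtain ⟨y, hy, hw⟩ := h2
    exact ⟨y, hy, by simpa [mem_closedBall, dist_eq_norm] using hw⟩
  have hge : ∀ y ∈ E, ε ≤ ‖y - x‖ := by
    intro y hy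
    by_contra hlt
    push Not at hlt
    apply hx.2
    apply interior_maximal _ isOpen_ball (show x ∈ ball y ε by
      rw [mem_ball, dist_comm, dist_eq_norm]; exact hlt)
    intro z hz
    apply hsub y hy z
    rw [mem_ball, dist_eq_norm] at hz
    exact hz.le
  have hcon : ∀ y ∈ E, ‖y - x‖ = ε → y ∈ contributors E ε x := by
    intro y hy hyx
    refine ⟨⟨subset_closure hy, fun hi => ?_⟩, hyx⟩
    have hc : Tendsto (fun t : ℝ => x + (1 - t) • (y - x)) (𝓝[>] 0) (𝓝 y) := by
      have : Continuous (fun t : ℝ => x + (1 - t) • (y - x)) := by fun_prop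
      have h := this.tendsto 0
      simp only [sub_zero, one_smul, add_sub_cancel] at h
      exact h.mono_left nhdsWithin_le_nhds
    have hev := hc.eventually (mem_interior_iff_mem_nhds.1 hi)
    have hev2 : ∀ᶠ t : ℝ in 𝓝[>] 0, t ∈ Ioo (0 : ℝ) 1 := Ioo_mem_nhdsGT one_pos
    obtain ⟨t, ht, ht0, ht1⟩ := (hev.and hev2).exists
    have h := hge _ ht
    rw [add_sub_cancel_left, norm_smul, hyx, Real.norm_eq_abs, abs_of_pos (by linarith)] at h
    nlinarith
  have hexp : ∀ y v : EuclideanSpace ℝ (Fin d),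
      ‖x + v - y‖ ^ 2 = ‖y - x‖ ^ 2 - 2 * ⟪y - x, v⟫ + ‖v‖ ^ 2 := by
    intro y v
    rw [← norm_sub_sq_real, ← norm_neg]
    congr 2
    abel
  have hxm : x ∈ eNbhd E ε := by
    have h := hx.1
    rwa [eNbhd, closure_closure] at h
  constructor
  · rintro ⟨-, u, hu, hux, huξ⟩ y hy
    have hyE : y ∈ E := hE.isClosed.frontier_subset hy.1
    have hle : ∀ n, ⟪y - x, (‖u n - x‖)⁻¹ • (u n - x)⟫ ≤ ‖u n - x‖ / 2 := by
      intro n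
      have h1 : ε < ‖u n - y‖ := by
        by_contra h
        exact hu n (hsub y hyE _ (not_lt.1 h))
      have h2 := hexp y (u n - x)
      rw [add_sub_cancel, hy.2] at h2
      have hpos : 0 < ‖u n - x‖ := by
        rw [norm_pos_iff, sub_ne_zero]
        intro h
        exact hu n (h ▸ hxm)
      rw [real_inner_smul_right, inv_mul_le_iff₀ hpos]
      nlinarith
    have hl : Tendsto (fun n => ⟪y - x, (‖u n - x‖)⁻¹ • (u n - x)⟫) atTop (𝓝 ⟪y - x, ξ⟫) :=
      tendsto_const_nhds.inner huξ
    have hr : Tendsto (fun n => ‖u n - x‖ / 2) atTop (𝓝 0) := by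
      have h := ((hux.sub_const x).norm).div_const 2
      simpa using h
    exact le_of_tendsto_of_tendsto' hl hr hle
  · intro hneg
    obtain ⟨δ, hδ, hK⟩ : ∃ δ > 0, ∀ y ∈ E, 0 ≤ ⟪y - x, ξ⟫ → ε + δ ≤ ‖y - x‖ := by
      have hcK : IsCompact (E ∩ {y | 0 ≤ ⟪y - x, ξ⟫}) := by
        apply hE.inter_right
        apply isClosed_le continuous_const
        fun_prop
      rcases (E ∩ {y | 0 ≤ ⟪y - x, ξ⟫}).eq_empty_or_nonempty with he | hne
      · refine ⟨1, one_pos, fun y hy h => ?_⟩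
        have : y ∈ E ∩ {y | 0 ≤ ⟪y - x, ξ⟫} := ⟨hy, h⟩
        rw [he] at this
        exact this.elim
      · obtain ⟨y₀, hy₀, hmin⟩ := hcK.exists_isMinOn hne
          (f := fun y => ‖y - x‖) (by fun_prop)
        have hlt : ε < ‖y₀ - x‖ := by
          refine lt_of_le_of_ne (hge y₀ hy₀.1) fun h => ?_
          have h1 := hneg y₀ (hcon y₀ hy₀.1 h.symm)
          have h2 : 0 ≤ ⟪y₀ - x, ξ⟫ := hy₀.2
          linarith
        refine ⟨‖y₀ - x‖ - ε, by linarith, fun y hy h => ?_⟩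
        have h3 : ‖y₀ - x‖ ≤ ‖y - x‖ := hmin ⟨hy, h⟩
        linarith
    have hout : ∀ t : ℝ, 0 < t → t < δ → x + t • ξ ∉ eNbhd E ε := by
      intro t ht htδ hmem
      obtain ⟨y, hy, hyε⟩ := hsup _ hmem
      have hnt : ‖t • ξ‖ = t := by rw [norm_smul, hξ, Real.norm_eq_abs, abs_of_pos ht, mul_one]
      have h1 : ‖y - x‖ ≤ ε + t := by
        have h := norm_sub_le (t • ξ) (x + t • ξ - y)
        have e : t • ξ - (x + t • ξ - y) = y - x := by abel
        rw [e, hnt] at h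
        linarith
      have h2 : ⟪y - x, ξ⟫ < 0 := by
        by_contra h
        have := hK y hy (not_lt.1 h)
        linarith
      have h3 := hexp y (t • ξ)
      rw [hnt, real_inner_smul_right] at h3
      have h4 := hge y hy
      have h5 := mul_pos ht (neg_pos.2 h2)
      have h6 : ‖x + t • ξ - y‖ ^ 2 ≤ ε ^ 2 := pow_le_pow_left₀ (norm_nonneg _) hyε 2
      have h7 : ε ^ 2 ≤ ‖y - x‖ ^ 2 := pow_le_pow_left₀ hε.le h4 2
      nlinarith [sq_nonneg t]
    have hpos : ∀ n : ℕ, 0 < δ / 2 * (1 / ((n : ℝ) + 1)) := fun n => by positivity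
    refine ⟨hξ, fun n => x + (δ / 2 * (1 / ((n : ℝ) + 1))) • ξ, fun n => ?_, ?_, ?_⟩
    · apply hout _ (hpos n)
      have : 1 / ((n : ℝ) + 1) ≤ 1 := by
        rw [div_le_one (by positivity)]
        linarith [Nat.cast_nonneg (α := ℝ) n]
      nlinarith
    · have h := (((tendsto_one_div_add_atTop_nhds_zero_nat (𝕜 := ℝ)).const_mul
        (δ / 2)).smul_const ξ).const_add x
      simpa using h
    · have : (fun n : ℕ => (‖x + (δ / 2 * (1 / ((n : ℝ) + 1))) • ξ - x‖)⁻¹ •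
          (x + (δ / 2 * (1 / ((n : ℝ) + 1))) • ξ - x)) = fun _ => ξ := by
        funext n
        rw [add_sub_cancel_left, norm_smul, hξ, mul_one, Real.norm_eq_abs, abs_of_pos (hpos n),
          smul_smul, inv_mul_cancel₀ (hpos n).ne', one_smul]
      rw [this]
      exact tendsto_const_nhds

end
end
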